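/- Let l ≥ 1 and let X = {A ∈ Mat_{2l×l}(ℂ) : AᵀJA = 0} be the set of 2l×l complex matrices with isotropic image. Then the subset {A ∈ X : rank A = l} of matrices of maximal rank is dense in X with respect to the standard topology on Mat_{2l×l}(ℂ). -/

import Mathlib

open Matrix

/-- The standard symplectic matrix `J = [[0, I],[−I, 0]]`. -/
def stdJ (l : ℕ) : Matrix (Fin l ⊕ Fin l) (Fin l ⊕ Fin l) ℂ :=
  Matrix.fromBlocks 0 1 (-1) 0

/-!
The image of `A` extends to an isotropic subspace `L` of dimension equal to the number of columns:
an isotropic subspace of less than half the dimension is strictly smaller than its orthogonal, and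
adjoining any vector of the orthogonal keeps it isotropic. If the columns of `M` form a basis of
`L`, then `A = M * C` for a square matrix `C`. Invertible matrices are dense, because a matrix has
finite spectrum, and `M * C'` has image exactly `L` whenever `C'` is invertible.
-/

open Module Topology

section Isotropic

lemma sup_span_singleton_le_orthogonal {R V : Type*} [CommRing R] [AddCommGroup V] [Module R V]
    {B : LinearMap.BilinForm R V} (hB : B.IsAlt) {W : Submodule R V} (hW : W ≤ B.orthogonal W)
    {v : V} (hv : v ∈ B.orthogonal W) :
    W ⊔ R ∙ v ≤ B.orthogonal (W ⊔ R ∙ v) := by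
  intro x hx y hy
  obtain ⟨a, ha, _, hc, rfl⟩ := Submodule.mem_sup.1 hx
  obtain ⟨c, rfl⟩ := Submodule.mem_span_singleton.1 hc
  obtain ⟨b, hb, _, hd, rfl⟩ := Submodule.mem_sup.1 hy
  obtain ⟨d, rfl⟩ := Submodule.mem_span_singleton.1 hd
  have hba : B b a = 0 := hW ha b hb
  have hbv : B b v = 0 := hv b hb
  have hva : B v a = 0 := hB.isRefl a v (hv a ha)
  change B (b + d • v) (a + c • v) = 0
  simp [hba, hbv, hva, hB.self_eq_zero v]

variable {K V : Type*} [Field K] [AddCommGroup V] [Module K V] [FiniteDimensional K V]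
  {B : LinearMap.BilinForm K V} {W : Submodule K V}

lemma exists_isotropic_ge_finrank_eq_succ (hB : B.IsAlt) (hW : W ≤ B.orthogonal W)
    (hdim : 2 * finrank K W < finrank K V) :
    ∃ L, W ≤ L ∧ L ≤ B.orthogonal L ∧ finrank K L = finrank K W + 1 := by
  have hlt : finrank K W < finrank K (B.orthogonal W) := by
    have := LinearMap.BilinForm.finrank_add_finrank_orthogonal hB.isRefl W
    lia
  obtain ⟨v, hv, hvW⟩ := SetLike.exists_of_lt (hW.lt_of_ne fun h => hlt.ne (by rw [← h]))
  exact ⟨W ⊔ K ∙ v, le_sup_left, sup_span_singleton_le_orthogonal hB hW hv,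
    Submodule.finrank_sup_span_singleton hvW⟩

lemma exists_isotropic_ge_finrank_eq (hB : B.IsAlt) (hW : W ≤ B.orthogonal W) {k : ℕ}
    (hWk : finrank K W ≤ k) (hk : 2 * k ≤ finrank K V) :
    ∃ L, W ≤ L ∧ L ≤ B.orthogonal L ∧ finrank K L = k := by
  induction k, hWk using Nat.le_induction with
  | base => exact ⟨W, le_rfl, hW, rfl⟩
  | succ k _ ih =>
    obtain ⟨L, hWL, hL, rfl⟩ := ih (by lia)
    obtain ⟨L', hLL', hL', hdim⟩ := exists_isotropic_ge_finrank_eq_succ hB hL (by lia)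
    exact ⟨L', hWL.trans hLL', hL', hdim⟩

end Isotropic

lemma transpose_mul_mul_eq_zero_iff_range_le_orthogonal {R m n : Type*} [CommRing R]
    [Fintype m] [DecidableEq m] [Fintype n] [DecidableEq n] {Ω : Matrix n n R} {A : Matrix n m R} :
    Aᵀ * Ω * A = 0 ↔
      LinearMap.range A.toLin' ≤ (toBilin' Ω).orthogonal (LinearMap.range A.toLin') := by
  rw [← toBilin'.map_eq_zero_iff, ← toBilin'_comp]
  constructor
  · rintro h _ ⟨x, rfl⟩ _ ⟨y, rfl⟩
    exact LinearMap.congr_fun₂ h y x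
  · intro h
    ext i j
    exact h ⟨_, rfl⟩ _ ⟨_, rfl⟩

section Range

variable {K m n : Type*} [Field K] [Fintype m] [DecidableEq m] [Finite n]

lemma exists_eq_mul_of_range_le {L : Submodule K (n → K)} (hL : finrank K L = Fintype.card m)
    {A : Matrix n m K} (hA : LinearMap.range A.toLin' ≤ L) :
    ∃ (M : Matrix n m K) (C : Matrix m m K), LinearMap.range M.toLin' = L ∧ A = M * C := by
  let e : (m → K) ≃ₗ[K] L := LinearEquiv.ofFinrankEq _ _ (by simp [hL])
  let A' : (m → K) →ₗ[K] L := A.toLin'.codRestrict L fun x => hA ⟨x, rfl⟩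
  refine ⟨LinearMap.toMatrix' (L.subtype ∘ₗ e), LinearMap.toMatrix' (e.symm ∘ₗ A'), ?_, ?_⟩
  · rw [toLin'_toMatrix', LinearMap.range_comp_of_range_eq_top _ e.range, Submodule.range_subtype]
  · rw [← LinearMap.toMatrix'_comp, ← toLin'.injective.eq_iff, toLin'_toMatrix']
    ext; simp [A']

variable [TopologicalSpace K] [IsTopologicalRing K] [T1Space K] [(𝓝[≠] (0 : K)).NeBot]

lemma dense_setOf_isUnit_matrix : Dense {C : Matrix m m K | IsUnit C} := by
  intro C
  have hlim : Filter.Tendsto (fun t : K => algebraMap K (Matrix m m K) t + C) (𝓝[≠] 0) (𝓝 C) := by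
    have hcont : Continuous fun t : K => algebraMap K (Matrix m m K) t + C := by
      simp only [Algebra.algebraMap_eq_smul_one]
      fun_prop
    simpa using (hcont.tendsto 0).mono_left nhdsWithin_le_nhds
  have hunit : ∀ᶠ t in 𝓝[≠] (0 : K), IsUnit (algebraMap K (Matrix m m K) t + C) := by
    filter_upwards [nhdsNE_le_cofinite 0 (finite_spectrum (-C)).compl_mem_cofinite] with t ht
    simpa using spectrum.notMem_iff.1 ht
  exact mem_closure_of_tendsto hlim hunit

lemma mem_closure_setOf_range_eq_of_range_le {L : Submodule K (n → K)}
    (hL : finrank K L = Fintype.card m) {A : Matrix n m K} (hA : LinearMap.range A.toLin' ≤ L) :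
    A ∈ closure {B : Matrix n m K | LinearMap.range B.toLin' = L} := by
  obtain ⟨M, C, rfl, rfl⟩ := exists_eq_mul_of_range_le hL hA
  refine map_mem_closure (f := (M * ·)) (by fun_prop) (dense_setOf_isUnit_matrix C) fun C' hC' => ?_
  change LinearMap.range (M * C').toLin' = LinearMap.range M.toLin'
  rw [toLin'_mul]
  exact LinearMap.range_comp_of_range_eq_top _
    (LinearMap.range_eq_top.2 (mulVec_surjective_iff_isUnit.2 hC'))

end Range

theorem stmt_10_general {K m n : Type*} [Field K] [TopologicalSpace K] [IsTopologicalRing K]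
    [T1Space K] [(𝓝[≠] (0 : K)).NeBot] [Fintype m] [Fintype n] [DecidableEq n]
    {Ω : Matrix n n K} (hΩ : (toBilin' Ω).IsAlt)
    (hmn : 2 * Fintype.card m ≤ Fintype.card n) {A : Matrix n m K} (hA : Aᵀ * Ω * A = 0) :
    A ∈ closure {B : Matrix n m K | Bᵀ * Ω * B = 0 ∧ B.rank = Fintype.card m} := by
  classical
  rw [transpose_mul_mul_eq_zero_iff_range_le_orthogonal] at hA
  obtain ⟨L, hAL, hL, hLm⟩ := exists_isotropic_ge_finrank_eq hΩ hA
    (k := Fintype.card m) A.rank_le_card_width (by simpa using hmn)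
  refine closure_mono ?_ (mem_closure_setOf_range_eq_of_range_le hLm hAL)
  rintro B rfl
  exact ⟨transpose_mul_mul_eq_zero_iff_range_le_orthogonal.2 hL, hLm⟩

lemma isAlt_toBilin'_stdJ (l : ℕ) : (toBilin' (stdJ l)).IsAlt := by
  intro x
  simp [toBilin'_apply, stdJ, one_apply, mul_comm]

/-- In the set `X` of `2l × l` complex matrices with isotropic image, the subset of
matrices of maximal rank `l` is dense for the standard topology: every point of `X`
lies in the closure of `{A ∈ X : rank A = l}`. -/
theorem stmt_10 (l : ℕ) (hl : 1 ≤ l) (A : Matrix (Fin l ⊕ Fin l) (Fin l) ℂ)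
    (hA : Aᵀ * stdJ l * A = 0) :
    A ∈ closure {B : Matrix (Fin l ⊕ Fin l) (Fin l) ℂ |
        Bᵀ * stdJ l * B = 0 ∧ B.rank = l} := by
  simpa using stmt_10_general (isAlt_toBilin'_stdJ l) (by simp [two_mul]) hA
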